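/- Consider a finite event trace (a list of events) satisfying: (i) the values of input watermark events are nondecreasing along the trace; (ii) the timestamps of first events are nondecreasing along the trace; (iii) every event first τ n precedes every input watermark event wm w with w > τ; and (iv) every next τ event is preceded by a first τ n event, and after every prefix the pending count pend(τ) = (sum of n − 1 over first τ n events in the prefix) − (number of next τ events in the prefix) is nonnegative. Then, in the output sequence produced by the algorithm of Listing 4 (an interleaving of forwarded tuples and forwarded watermarks), no forwarded tuple is a late arrival: every tuple forwarded after a forwarded watermark of value W has timestamp ≥ W. That is, the algorithm enforces condition C3 (Lemma 4). -/

import Mathlib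

/-- Events on the stream `S_{A₂}` carrying the outputs of the first Aggregate
`A₁` of the Unfold operator: `first τ n` is the first of `n` successor tuples
at timestamp `τ` output by `A₁` from one embedded tuple (announcing `n - 1`
further successors at `τ`), `next τ` is a further successor tuple at
timestamp `τ`, and `wm w` is an input watermark of value `w`. -/
inductive SA2Event : Type
  | first (τ n : ℕ)
  | next (τ : ℕ)
  | wm (w : ℕ)
deriving DecidableEq

/-- Pending count at timestamp `τ` after a prefix of events:
(sum of `n - 1` over `first τ n` events) − (number of `next τ` events). -/
def pendZ (pre : List SA2Event) (τ : ℕ) : ℤ :=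
  (pre.map (fun e =>
    match e with
    | .first τ' n => if τ' = τ then (n : ℤ) - 1 else 0
    | .next τ' => if τ' = τ then (-1 : ℤ) else 0
    | .wm _ => 0)).sum

/-- The input watermark values occurring in a trace, in order. -/
def wmValues (tr : List SA2Event) : List ℕ :=
  tr.filterMap (fun e => match e with | .wm w => some w | _ => none)

/-- The timestamps of the `first` events of a trace, in order. -/
def firstTimes (tr : List SA2Event) : List ℕ :=
  tr.filterMap (fun e => match e with | .first τ _ => some τ | _ => none)

/-- State of the algorithm of Listing 4: the pending successor counts (a key
is absent iff its count is `0`), the last forwarded watermark, and the output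
sequence produced so far — an interleaving of forwarded tuples (carrying
their timestamp, `Sum.inl τ`) and forwarded watermarks (`Sum.inr w`). -/
structure C3State where
  pend : ℕ → ℕ
  lastW : WithBot ℕ
  out : List (ℕ ⊕ ℕ)

open scoped Classical in
/-- Watermark-forwarding part of Listing 4: if all pending counts are zero,
forward the default value `dflt` as a watermark; otherwise, with `m` the
least timestamp with positive pending count, forward `m - 1` as a watermark
if `m - 1 > lastW`. -/
noncomputable def emitWm (s : C3State) (dflt : ℕ) : C3State :=
  if _ : ∃ t, 0 < s.pend t then
    let m := sInf {t | 0 < s.pend t}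
    if s.lastW < ((m - 1 : ℕ) : WithBot ℕ) then
      { s with out := s.out ++ [Sum.inr (m - 1)],
               lastW := ((m - 1 : ℕ) : WithBot ℕ) }
    else s
  else { s with out := s.out ++ [Sum.inr dflt], lastW := (dflt : WithBot ℕ) }

/-- One step of the algorithm of Listing 4: every tuple is forwarded
immediately upon reception; on `first τ n` the pending count at key `τ` is
increased by `n - 1`, on `next τ` it is decreased by `1` (the key is removed
when it reaches `0`); after forwarding a tuple with timestamp `τ` the
algorithm may forward a watermark (with default `τ`), and upon an input
watermark `wm w` it may forward a watermark (with default `w`). -/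
noncomputable def c3Step (s : C3State) (e : SA2Event) : C3State :=
  match e with
  | .first τ n =>
      emitWm { s with pend := Function.update s.pend τ (s.pend τ + (n - 1)),
                      out := s.out ++ [Sum.inl τ] } τ
  | .next τ =>
      emitWm { s with pend := Function.update s.pend τ (s.pend τ - 1),
                      out := s.out ++ [Sum.inl τ] } τ
  | .wm w => emitWm s w

/-- Running the algorithm of Listing 4 over a trace, starting with all
pending counts `0`, no forwarded watermark yet, and an empty output. -/
noncomputable def c3Run (tr : List SA2Event) : C3State :=
  tr.foldl c3Step ⟨fun _ => 0, ⊥, []⟩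

/-!
Call a timestamp *expected* if it has a positive pending count or is the timestamp of a `first`
event still to come. Every tuple received next has an expected timestamp, and receiving an event
never creates a new expected timestamp. It therefore suffices that every forwarded watermark is a
lower bound of the expected timestamps. For `m - 1` this holds because pending timestamps never
exceed those of later `first` events; for the default value, forwarded only with nothing pending,
because the timestamp or value of an event never exceeds the timestamps of later `first` events.
-/

/-- Holds between an output item and a later one unless the later one is a tuple made late by the
earlier watermark. `Sum.inl` and `Sum.inr` mark tuples and watermarks as in `C3State.out`. -/
def NotLate : ℕ ⊕ ℕ → ℕ ⊕ ℕ → Prop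
  | .inr W, .inl τ => W ≤ τ
  | _, _ => True

/-- Condition C3 for an output sequence to which tuples with timestamps in `T` may still be
appended. -/
structure SafeFor (out : List (ℕ ⊕ ℕ)) (T : Set ℕ) : Prop where
  pairwise_notLate : out.Pairwise NotLate
  wm_mem_lowerBounds : ∀ W, Sum.inr W ∈ out → W ∈ lowerBounds T

namespace SafeFor

variable {out : List (ℕ ⊕ ℕ)} {T T' : Set ℕ}

theorem anti (h : SafeFor out T) (hT : T' ⊆ T) : SafeFor out T' where
  pairwise_notLate := h.pairwise_notLate
  wm_mem_lowerBounds W hW := lowerBounds_mono_set hT (h.wm_mem_lowerBounds W hW)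

theorem append_tuple (h : SafeFor out T) {τ : ℕ} (hτ : τ ∈ T) :
    SafeFor (out ++ [Sum.inl τ]) T where
  pairwise_notLate := by
    refine List.pairwise_append.2 ⟨h.pairwise_notLate, List.pairwise_singleton _ _, ?_⟩
    simp only [List.mem_singleton, forall_eq]
    rintro (_ | W) hW
    · trivial
    · exact h.wm_mem_lowerBounds W hW hτ
  wm_mem_lowerBounds W hW := h.wm_mem_lowerBounds W (by simpa using hW)

theorem append_wm (h : SafeFor out T) {W : ℕ} (hW : W ∈ lowerBounds T) :
    SafeFor (out ++ [Sum.inr W]) T where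
  pairwise_notLate := by
    refine List.pairwise_append.2 ⟨h.pairwise_notLate, List.pairwise_singleton _ _, ?_⟩
    simp only [List.mem_singleton, forall_eq]
    rintro (_ | _) _ <;> trivial
  wm_mem_lowerBounds W' hW' := by
    rcases List.mem_append.1 hW' with hold | hnew
    · exact h.wm_mem_lowerBounds W' hold
    · obtain rfl : W' = W := by simpa using hnew
      exact hW

end SafeFor

theorem mem_firstTimes {tr : List SA2Event} {τ : ℕ} :
    τ ∈ firstTimes tr ↔ ∃ n, SA2Event.first τ n ∈ tr := by
  simp only [firstTimes, List.mem_filterMap]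
  constructor
  · rintro ⟨_ | _ | _, hmem, heq⟩ <;> cases heq
    exact ⟨_, hmem⟩
  · rintro ⟨n, hmem⟩
    exact ⟨_, hmem, rfl⟩

theorem firstTimes_sublist_cons (e : SA2Event) (tr : List SA2Event) :
    (firstTimes tr).Sublist (firstTimes (e :: tr)) :=
  (List.sublist_cons_self e tr).filterMap _

namespace SA2Event

/-- The timestamp of a tuple or the value of an input watermark: the default value with which
Listing 4 may forward a watermark on this event. -/
def time : SA2Event → ℕ
  | first τ _ => τ
  | next τ => τ
  | wm w => w

/-- The tuple that Listing 4 forwards on an event, if any, as a piece of the output sequence. -/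
def forwarded : SA2Event → List (ℕ ⊕ ℕ)
  | first τ _ => [Sum.inl τ]
  | next τ => [Sum.inl τ]
  | wm _ => []

/-- The pending counts that Listing 4 holds after an event, given those before it. -/
def updatePend (pend : ℕ → ℕ) : SA2Event → ℕ → ℕ
  | first τ n => Function.update pend τ (pend τ + (n - 1))
  | next τ => Function.update pend τ (pend τ - 1)
  | wm _ => pend

variable {pend : ℕ → ℕ}

theorem pos_of_updatePend_pos {e : SA2Event} {t : ℕ} (ht : 0 < e.updatePend pend t) :
    0 < pend t ∨ ∃ n, e = first t n := by
  cases e with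
  | first τ n =>
    obtain rfl | hne := eq_or_ne t τ
    · exact .inr ⟨n, rfl⟩
    · exact .inl (by simpa only [updatePend, Function.update_of_ne hne] using ht)
  | next τ =>
    have hle : updatePend pend (next τ) ≤ pend := update_le_self_iff.2 (Nat.sub_le _ _)
    exact .inl (ht.trans_le (hle t))
  | wm w => exact .inl ht

-- An inequality only, because both subtractions in `updatePend` are truncated.
theorem pend_add_pendZ_cons_le (e : SA2Event) (pre : List SA2Event) (t : ℕ) :
    pend t + pendZ (e :: pre) t ≤ e.updatePend pend t + pendZ pre t := by
  have hcons : pendZ (e :: pre) t = pendZ [e] t + pendZ pre t := by simp [pendZ]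
  have hsingle : pend t + pendZ [e] t ≤ e.updatePend pend t := by
    cases e with
    | first τ n =>
      obtain rfl | hne := eq_or_ne t τ
      · simp only [pendZ, updatePend, List.map_cons, List.map_nil, List.sum_cons, List.sum_nil,
          if_true, Function.update_self]
        omega
      · simp [pendZ, updatePend, hne, hne.symm]
    | next τ =>
      obtain rfl | hne := eq_or_ne t τ
      · simp only [pendZ, updatePend, List.map_cons, List.map_nil, List.sum_cons, List.sum_nil,
          if_true, Function.update_self]
        omega
      · simp [pendZ, updatePend, hne, hne.symm]
    | wm w => simp [pendZ, updatePend]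
  omega

end SA2Event

theorem c3Step_eq_emitWm (s : C3State) (e : SA2Event) :
    c3Step s e =
      emitWm { s with pend := e.updatePend s.pend, out := s.out ++ e.forwarded } e.time := by
  cases e <;> simp [c3Step, SA2Event.updatePend, SA2Event.forwarded, SA2Event.time]

/-- The timestamps that tuples still to be received may have, given the current pending counts and
the remaining trace. -/
def expectedTimes (pend : ℕ → ℕ) (suf : List SA2Event) : Set ℕ :=
  {t | 0 < pend t} ∪ {t | t ∈ firstTimes suf}

theorem expectedTimes_updatePend_subset (pend : ℕ → ℕ) (e : SA2Event) (suf : List SA2Event) :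
    expectedTimes (e.updatePend pend) suf ⊆ expectedTimes pend (e :: suf) := by
  rintro t (hpend | hfirst)
  · obtain hpend | ⟨n, rfl⟩ := SA2Event.pos_of_updatePend_pos hpend
    · exact .inl hpend
    · exact .inr (mem_firstTimes.2 ⟨n, List.mem_cons_self⟩)
  · exact .inr ((firstTimes_sublist_cons e suf).subset hfirst)

/-- The conditions on a trace, for a remaining trace `suf` met with pending counts `pend`. The field
`pend_le_first` is what the monotonicity of `first` timestamps says across the cut. -/
structure AdmissibleFrom (pend : ℕ → ℕ) (suf : List SA2Event) : Prop where
  first_mono : (firstTimes suf).Pairwise (· ≤ ·)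
  wm_le_first : ∀ (l₁ l₂ rest : List SA2Event) (w τ n : ℕ),
    suf = l₁ ++ SA2Event.wm w :: l₂ ++ SA2Event.first τ n :: rest → w ≤ τ
  pend_nonneg : ∀ pre, pre <+: suf → ∀ τ, 0 ≤ pend τ + pendZ pre τ
  pend_le_first : ∀ t, 0 < pend t → ∀ τ ∈ firstTimes suf, t ≤ τ

namespace AdmissibleFrom

variable {pend : ℕ → ℕ} {e : SA2Event} {suf : List SA2Event}

theorem pend_pos_of_next {τ : ℕ} (h : AdmissibleFrom pend (.next τ :: suf)) : 0 < pend τ := by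
  have hnonneg : 0 ≤ pend τ + pendZ [.next τ] τ := h.pend_nonneg _ (by simp) τ
  have hnext : pendZ [.next τ] τ = -1 := by simp [pendZ]
  omega

theorem time_le_first (h : AdmissibleFrom pend (e :: suf)) :
    ∀ τ ∈ firstTimes suf, e.time ≤ τ := by
  intro τ hτ
  cases e with
  | first τ' n => exact List.rel_of_pairwise_cons h.first_mono hτ
  | next τ' => exact h.pend_le_first τ' h.pend_pos_of_next τ hτ
  | wm w =>
    obtain ⟨n, hmem⟩ := mem_firstTimes.1 hτ
    obtain ⟨l, rest, rfl⟩ := List.append_of_mem hmem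
    exact h.wm_le_first [] l rest w τ n rfl

theorem tail (h : AdmissibleFrom pend (e :: suf)) : AdmissibleFrom (e.updatePend pend) suf where
  first_mono := h.first_mono.sublist (firstTimes_sublist_cons e suf)
  wm_le_first l₁ l₂ rest w τ n hsuf := h.wm_le_first (e :: l₁) l₂ rest w τ n (by rw [hsuf]; rfl)
  pend_nonneg pre hpre τ :=
    (h.pend_nonneg (e :: pre) ((List.prefix_cons_inj e).2 hpre) τ).trans
      (e.pend_add_pendZ_cons_le pre τ)
  pend_le_first t ht τ hτ := by
    obtain hpend | ⟨n, rfl⟩ := SA2Event.pos_of_updatePend_pos ht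
    · exact h.pend_le_first t hpend τ ((firstTimes_sublist_cons e suf).subset hτ)
    · exact h.time_le_first τ hτ

theorem safeFor_append_forwarded (h : AdmissibleFrom pend (e :: suf)) {out : List (ℕ ⊕ ℕ)}
    (hout : SafeFor out (expectedTimes pend (e :: suf))) :
    SafeFor (out ++ e.forwarded) (expectedTimes pend (e :: suf)) := by
  cases e with
  | first τ n => exact hout.append_tuple (.inr (mem_firstTimes.2 ⟨n, List.mem_cons_self⟩))
  | next τ => exact hout.append_tuple (.inl h.pend_pos_of_next)
  | wm w => simpa only [SA2Event.forwarded, List.append_nil] using hout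

end AdmissibleFrom

theorem emitWm_pend (s : C3State) (d : ℕ) : (emitWm s d).pend = s.pend := by
  unfold emitWm
  dsimp only
  split_ifs <;> rfl

theorem sInf_pend_mem_lowerBounds {pend : ℕ → ℕ} {suf : List SA2Event}
    (hpos : ∃ t, 0 < pend t) (hpend : ∀ t, 0 < pend t → ∀ τ ∈ firstTimes suf, t ≤ τ) :
    sInf {t | 0 < pend t} ∈ lowerBounds (expectedTimes pend suf) := by
  rintro t (ht | ht)
  · exact Nat.sInf_le ht
  · exact hpend _ (Nat.sInf_mem hpos) t ht

theorem safeFor_emitWm {s : C3State} {suf : List SA2Event} {d : ℕ}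
    (hout : SafeFor s.out (expectedTimes s.pend suf))
    (hpend : ∀ t, 0 < s.pend t → ∀ τ ∈ firstTimes suf, t ≤ τ)
    (hd : ∀ τ ∈ firstTimes suf, d ≤ τ) :
    SafeFor (emitWm s d).out (expectedTimes s.pend suf) := by
  unfold emitWm
  dsimp only
  split_ifs with hpos hlt
  · exact hout.append_wm fun t ht ↦
      (Nat.sub_le _ 1).trans (sInf_pend_mem_lowerBounds hpos hpend ht)
  · exact hout
  · refine hout.append_wm ?_
    rintro t (ht | ht)
    · exact absurd ⟨t, ht⟩ hpos
    · exact hd t ht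

theorem AdmissibleFrom.safeFor_c3Step {s : C3State} {e : SA2Event} {suf : List SA2Event}
    (h : AdmissibleFrom s.pend (e :: suf))
    (hout : SafeFor s.out (expectedTimes s.pend (e :: suf))) :
    SafeFor (c3Step s e).out (expectedTimes (c3Step s e).pend suf) := by
  rw [c3Step_eq_emitWm, emitWm_pend]
  have hforwarded := (h.safeFor_append_forwarded hout).anti
    (expectedTimes_updatePend_subset s.pend e suf)
  exact safeFor_emitWm hforwarded h.tail.pend_le_first h.time_le_first

theorem AdmissibleFrom.pairwise_notLate_foldl {s : C3State} {suf : List SA2Event}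
    (h : AdmissibleFrom s.pend suf) (hout : SafeFor s.out (expectedTimes s.pend suf)) :
    (suf.foldl c3Step s).out.Pairwise NotLate := by
  induction suf generalizing s with
  | nil => exact hout.pairwise_notLate
  | cons e suf ih =>
    have htail : AdmissibleFrom (c3Step s e).pend suf := by
      rw [c3Step_eq_emitWm, emitWm_pend]
      exact h.tail
    exact ih htail (h.safeFor_c3Step hout)

theorem listing4_enforces_C3_general (trace : List SA2Event)
    (h_first_mono : (firstTimes trace).Pairwise (· ≤ ·))
    (h_first_before_wm : ∀ (l₁ l₂ rest : List SA2Event) (w τ n : ℕ),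
      trace = l₁ ++ SA2Event.wm w :: l₂ ++ SA2Event.first τ n :: rest → w ≤ τ)
    (h_pend_nonneg : ∀ pre, pre <+: trace → ∀ τ, 0 ≤ pendZ pre τ) :
    ∀ (o₁ o₂ rest : List (ℕ ⊕ ℕ)) (W τ : ℕ),
      (c3Run trace).out = o₁ ++ Sum.inr W :: o₂ ++ Sum.inl τ :: rest →
        W ≤ τ := by
  intro o₁ o₂ rest W τ hout
  have hadm : AdmissibleFrom (fun _ ↦ 0) trace :=
    { first_mono := h_first_mono
      wm_le_first := h_first_before_wm
      pend_nonneg := by simpa using h_pend_nonneg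
      pend_le_first := by simp }
  have hsafe : SafeFor [] (expectedTimes (fun _ ↦ 0) trace) := ⟨.nil, by simp⟩
  have hrun : (c3Run trace).out.Pairwise NotLate :=
    hadm.pairwise_notLate_foldl (s := ⟨fun _ ↦ 0, ⊥, []⟩) hsafe
  rw [hout, List.pairwise_append] at hrun
  exact hrun.2.2 (Sum.inr W) (by simp) (Sum.inl τ) (by simp)

/-- Lemma 4: over any trace in which (i) input watermark values are
nondecreasing, (ii) the timestamps of `first` events are nondecreasing,
(iii) every `first τ n` event precedes every input watermark `wm w` with
`w > τ`, and (iv) every `next τ` event is preceded by a `first τ n` event and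
all pending counts stay nonnegative after every prefix, the output sequence
produced by the algorithm of Listing 4 contains no late arrival: every tuple
forwarded after a forwarded watermark of value `W` has timestamp `≥ W`
(condition C3). -/
theorem listing4_enforces_C3 (trace : List SA2Event)
    (h_wm_mono : (wmValues trace).Pairwise (· ≤ ·))
    (h_first_mono : (firstTimes trace).Pairwise (· ≤ ·))
    (h_first_before_wm : ∀ (l₁ l₂ rest : List SA2Event) (w τ n : ℕ),
      trace = l₁ ++ SA2Event.wm w :: l₂ ++ SA2Event.first τ n :: rest → w ≤ τ)
    (h_next_after_first : ∀ (l₁ rest : List SA2Event) (τ : ℕ),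
      trace = l₁ ++ SA2Event.next τ :: rest → ∃ n, SA2Event.first τ n ∈ l₁)
    (h_pend_nonneg : ∀ pre, pre <+: trace → ∀ τ, 0 ≤ pendZ pre τ) :
    ∀ (o₁ o₂ rest : List (ℕ ⊕ ℕ)) (W τ : ℕ),
      (c3Run trace).out = o₁ ++ Sum.inr W :: o₂ ++ Sum.inl τ :: rest →
        W ≤ τ :=
  listing4_enforces_C3_general trace h_first_mono h_first_before_wm h_pend_nonneg
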